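/- Let A ∈ ℝ^{m×n} with m ≤ n and n ≥ 3, M = AᵀA, P = M⊙M, let F, G ∈ ℝ^{n×n} be the fourth-order matrices of A, let σ ≥ 0, 0 ≤ p ≤ 1, μ > 0, and define C = 2p·P² + 2p²·F + 2pσ²·(M²⊙M) + 2σ⁴·((A⊙A)ᵀ(A⊙A) + G). Suppose ‖A‖₂ ≤ √(n/m)·μ, ‖A‖_max ≤ √(n·log(n)/m)·μ, ‖M‖_max ≤ log(n)·μ², ‖F‖₂ ≤ (n²/m²)·log²(n)·μ⁸, and ‖G‖₂ ≤ (n/m)·log(n)·μ⁴. Then ‖C‖₂ ≤ 4p·(n²/m²)·log²(n)·μ⁸ + 2p·(n²/m²)·log(n)·μ⁶·σ² + 4·(n²/m²)·log(n)·μ⁴·σ⁴. -/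

import Mathlib

open Matrix

/-- The spectral norm (largest singular value) of a real matrix, as the operator norm of
the induced map between Euclidean spaces. -/
noncomputable def specNorm {m n : ℕ} (A : Matrix (Fin m) (Fin n) ℝ) : ℝ :=
  ‖(Matrix.toEuclideanLin.trans LinearMap.toContinuousLinearMap) A‖

/-- The max-norm of a matrix: the largest absolute value of its entries. -/
noncomputable def maxNorm {m n : ℕ} (A : Matrix (Fin m) (Fin n) ℝ) : ℝ :=
  ⨆ i, ⨆ j, |A i j|

/-- The fourth-order matrix `F(i,j) = Σ_k Σ_{k'≠k} m_{i,k} m_{i,k'} m_{j,k} m_{j,k'}`. -/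
def Fmat {n : ℕ} (M : Matrix (Fin n) (Fin n) ℝ) : Matrix (Fin n) (Fin n) ℝ :=
  Matrix.of fun i j =>
    ∑ k, ∑ k' ∈ Finset.univ.erase k, M i k * M i k' * M j k * M j k'

/-- The fourth-order matrix `G(i,j) = Σ_k Σ_{k'≠k} a_{k,i} a_{k,j} a_{k',i} a_{k',j}`. -/
def Gmat {m n : ℕ} (A : Matrix (Fin m) (Fin n) ℝ) : Matrix (Fin n) (Fin n) ℝ :=
  Matrix.of fun i j =>
    ∑ k, ∑ k' ∈ Finset.univ.erase k, A k i * A k j * A k' i * A k' j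

/-!
Since `M = Aᵀ A` is a Gram matrix, `x ⬝ (N ⊙ M) y = ∑ₗ (Aₗ x) ⬝ N (Aₗ y)`, where the row `Aₗ` acts
by entrywise multiplication, so Cauchy-Schwarz gives Schur's bound `‖N ⊙ M‖ ≤ ‖N‖ maxᵢ Mᵢᵢ`.
With `N = M` and `N = M²` it controls `P` and `M² ⊙ M` through `‖M‖ = ‖A‖²`. The `σ⁴` term needs
no separate estimate: `G` is the off-diagonal part of the expanded square `M ⊙ M`, so
`(A ⊙ A)ᵀ (A ⊙ A) + G = P`.
-/

section SchurBound

open scoped Matrix.Norms.L2Operator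

variable {k m n 𝕜 : Type*} [Fintype k] [Fintype m] [Fintype n]

lemma star_dotProduct_hadamard_conjTranspose_mul_mulVec {R : Type*} [CommSemiring R] [StarRing R]
    (N : Matrix m n R) (A : Matrix k m R) (B : Matrix k n R) (x : m → R) (y : n → R) :
    star x ⬝ᵥ (N ⊙ (Aᴴ * B)) *ᵥ y = ∑ l, star (A l * x) ⬝ᵥ N *ᵥ (B l * y) := by
  simp only [dotProduct, mulVec, hadamard_apply, mul_apply, conjTranspose_apply, Pi.star_apply,
    Pi.mul_apply, star_mul', Finset.mul_sum, Finset.sum_mul]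
  rw [Finset.sum_comm_cycle]
  refine Finset.sum_congr rfl fun l _ ↦ Finset.sum_congr rfl fun i _ ↦
    Finset.sum_congr rfl fun j _ ↦ ?_
  ring

variable [RCLike 𝕜]

lemma sum_norm_sq_toLp_row_mul_le {A : Matrix k n 𝕜} {a : ℝ} (ha : ∀ j, ∑ l, ‖A l j‖ ^ 2 ≤ a)
    (x : n → 𝕜) :
    ∑ l, ‖WithLp.toLp 2 (A l * x)‖ ^ 2 ≤ a * ‖WithLp.toLp 2 x‖ ^ 2 := by
  simp only [EuclideanSpace.norm_sq_eq, Pi.mul_apply, norm_mul, mul_pow]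
  rw [Finset.sum_comm, Finset.mul_sum]
  refine Finset.sum_le_sum fun j _ ↦ ?_
  rw [← Finset.sum_mul]
  gcongr
  exact ha j

variable [DecidableEq n]

lemma re_star_dotProduct_mulVec_le (N : Matrix m n 𝕜) (x : m → 𝕜) (y : n → 𝕜) :
    RCLike.re (star x ⬝ᵥ N *ᵥ y) ≤ ‖N‖ * (‖WithLp.toLp 2 x‖ * ‖WithLp.toLp 2 y‖) := by
  have hN : ‖WithLp.toLp 2 (N *ᵥ y)‖ ≤ ‖N‖ * ‖WithLp.toLp 2 y‖ :=
    l2_opNorm_mulVec N (WithLp.toLp 2 y)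
  calc RCLike.re (star x ⬝ᵥ N *ᵥ y)
      = RCLike.re (inner 𝕜 (WithLp.toLp 2 x) (WithLp.toLp 2 (N *ᵥ y))) := by
        rw [EuclideanSpace.inner_toLp_toLp, dotProduct_comm]
    _ ≤ ‖WithLp.toLp 2 x‖ * ‖WithLp.toLp 2 (N *ᵥ y)‖ := re_inner_le_norm _ _
    _ ≤ ‖WithLp.toLp 2 x‖ * (‖N‖ * ‖WithLp.toLp 2 y‖) := by gcongr
    _ = ‖N‖ * (‖WithLp.toLp 2 x‖ * ‖WithLp.toLp 2 y‖) := by ring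

lemma l2_opNorm_le_of_re_star_dotProduct_mulVec_le {N : Matrix m n 𝕜} {c : ℝ} (hc : 0 ≤ c)
    (h : ∀ x y, RCLike.re (star x ⬝ᵥ N *ᵥ y) ≤ c * (‖WithLp.toLp 2 x‖ * ‖WithLp.toLp 2 y‖)) :
    ‖N‖ ≤ c := by
  rw [l2_opNorm_def]
  refine ContinuousLinearMap.opNorm_le_of_re_inner_le hc fun y x hy hx ↦ ?_
  rw [inner_re_symm, EuclideanSpace.inner_eq_star_dotProduct, dotProduct_comm]
  simpa [hx, hy] using h x.ofLp y.ofLp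

theorem l2_opNorm_hadamard_conjTranspose_mul_le (N : Matrix m n 𝕜) {A : Matrix k m 𝕜}
    {B : Matrix k n 𝕜} {a b : ℝ} (ha : ∀ i, ∑ l, ‖A l i‖ ^ 2 ≤ a)
    (hb : ∀ j, ∑ l, ‖B l j‖ ^ 2 ≤ b) :
    ‖N ⊙ (Aᴴ * B)‖ ≤ ‖N‖ * (√a * √b) := by
  refine l2_opNorm_le_of_re_star_dotProduct_mulVec_le (by positivity) fun x y ↦ ?_
  rw [star_dotProduct_hadamard_conjTranspose_mul_mulVec, map_sum]
  calc ∑ l, RCLike.re (star (A l * x) ⬝ᵥ N *ᵥ (B l * y))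
      ≤ ∑ l, ‖N‖ * (‖WithLp.toLp 2 (A l * x)‖ * ‖WithLp.toLp 2 (B l * y)‖) :=
        Finset.sum_le_sum fun l _ ↦ re_star_dotProduct_mulVec_le _ _ _
    _ = ‖N‖ * ∑ l, ‖WithLp.toLp 2 (A l * x)‖ * ‖WithLp.toLp 2 (B l * y)‖ := by
        rw [Finset.mul_sum]
    _ ≤ ‖N‖ * (√(∑ l, ‖WithLp.toLp 2 (A l * x)‖ ^ 2) * √(∑ l, ‖WithLp.toLp 2 (B l * y)‖ ^ 2)) := by
        gcongr
        exact Real.sum_mul_le_sqrt_mul_sqrt _ _ _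
    _ ≤ ‖N‖ * (√(a * ‖WithLp.toLp 2 x‖ ^ 2) * √(b * ‖WithLp.toLp 2 y‖ ^ 2)) := by
        gcongr
        exacts [sum_norm_sq_toLp_row_mul_le ha x, sum_norm_sq_toLp_row_mul_le hb y]
    _ = ‖N‖ * (√a * √b) * (‖WithLp.toLp 2 x‖ * ‖WithLp.toLp 2 y‖) := by
        rw [Real.sqrt_mul' _ (sq_nonneg _), Real.sqrt_mul' _ (sq_nonneg _),
          Real.sqrt_sq (norm_nonneg _), Real.sqrt_sq (norm_nonneg _)]
        ring

theorem l2_opNorm_hadamard_transpose_mul_self_le (N : Matrix n n ℝ) {A : Matrix m n ℝ} {d : ℝ}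
    (hd₀ : 0 ≤ d) (hd : ∀ j, (Aᵀ * A) j j ≤ d) :
    ‖N ⊙ (Aᵀ * A)‖ ≤ ‖N‖ * d := by
  have hcol (j : n) : ∑ l, ‖A l j‖ ^ 2 ≤ d := by
    simpa [mul_apply, sq] using hd j
  simpa [conjTranspose_eq_transpose_of_trivial, Real.mul_self_sqrt hd₀] using
    l2_opNorm_hadamard_conjTranspose_mul_le N hcol hcol

lemma l2_opNorm_transpose_mul_self (A : Matrix m n ℝ) : ‖Aᵀ * A‖ = ‖A‖ ^ 2 := by
  rw [← conjTranspose_eq_transpose_of_trivial, l2_opNorm_conjTranspose_mul_self, sq]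

end SchurBound

lemma hadamard_self_transpose_mul_self_add_Gmat {m n : ℕ} (A : Matrix (Fin m) (Fin n) ℝ) :
    (A ⊙ A)ᵀ * (A ⊙ A) + Gmat A = (Aᵀ * A) ⊙ (Aᵀ * A) := by
  ext i j
  simp only [Matrix.add_apply, mul_apply, hadamard_apply, transpose_apply, Gmat, of_apply,
    Finset.sum_mul_sum, ← Finset.sum_add_distrib]
  refine Finset.sum_congr rfl fun k _ ↦ ?_
  rw [← Finset.add_sum_erase _ _ (Finset.mem_univ k)]
  ring_nf

lemma abs_le_maxNorm {m n : ℕ} (A : Matrix (Fin m) (Fin n) ℝ) (i : Fin m) (j : Fin n) :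
    |A i j| ≤ maxNorm A :=
  (le_ciSup (Set.finite_range fun j ↦ |A i j|).bddAbove j).trans
    (le_ciSup (Set.finite_range fun i ↦ ⨆ j, |A i j|).bddAbove i)

lemma maxNorm_nonneg {m n : ℕ} (A : Matrix (Fin m) (Fin n) ℝ) : 0 ≤ maxNorm A :=
  Real.iSup_nonneg fun _ ↦ Real.iSup_nonneg fun _ ↦ abs_nonneg _

section CovarianceBound

open scoped Matrix.Norms.L2Operator

lemma specNorm_eq_l2_opNorm {m n : ℕ} (A : Matrix (Fin m) (Fin n) ℝ) : specNorm A = ‖A‖ := rfl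

lemma norm_covariance_combination_le {E : Type*} [SeminormedAddCommGroup E] [NormedSpace ℝ E]
    {p : ℝ} (hp₀ : 0 ≤ p) (hp₁ : p ≤ 1) (σ : ℝ) (X Y Z W : E) :
    ‖(2 * p) • X + (2 * p ^ 2) • Y + (2 * p * σ ^ 2) • Z + (2 * σ ^ 4) • W‖
      ≤ 2 * p * (‖X‖ + ‖Y‖) + 2 * p * σ ^ 2 * ‖Z‖ + 2 * σ ^ 4 * ‖W‖ := by
  have hp_sq : p ^ 2 ≤ p := pow_le_of_le_one hp₀ hp₁ two_ne_zero
  calc _ ≤ ‖(2 * p) • X‖ + ‖(2 * p ^ 2) • Y‖ + ‖(2 * p * σ ^ 2) • Z‖ + ‖(2 * σ ^ 4) • W‖ :=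
        norm_add₄_le
    _ = 2 * p * ‖X‖ + 2 * p ^ 2 * ‖Y‖ + 2 * p * σ ^ 2 * ‖Z‖ + 2 * σ ^ 4 * ‖W‖ := by
        rw [norm_smul_of_nonneg (by positivity), norm_smul_of_nonneg (by positivity),
          norm_smul_of_nonneg (by positivity), norm_smul_of_nonneg (by positivity)]
    _ ≤ 2 * p * ‖X‖ + 2 * p * ‖Y‖ + 2 * p * σ ^ 2 * ‖Z‖ + 2 * σ ^ 4 * ‖W‖ := by gcongr
    _ = _ := by ring

theorem l2_opNorm_covariance_le {m n : Type*} [Fintype m] [Fintype n] [DecidableEq n]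
    {A : Matrix m n ℝ} {M F : Matrix n n ℝ} {σ p a d : ℝ} (hM : M = Aᵀ * A)
    (hp₀ : 0 ≤ p) (hp₁ : p ≤ 1) (hA : ‖A‖ ^ 2 ≤ a) (hd₀ : 0 ≤ d) (hd : ∀ j, M j j ≤ d)
    (hF : ‖F‖ ≤ a ^ 2 * d ^ 2) :
    ‖(2 * p) • (M ⊙ M * M ⊙ M) + (2 * p ^ 2) • F + (2 * p * σ ^ 2) • ((M * M) ⊙ M)
        + (2 * σ ^ 4) • (M ⊙ M)‖
      ≤ 4 * p * (a ^ 2 * d ^ 2) + 2 * p * σ ^ 2 * (a ^ 2 * d) + 2 * σ ^ 4 * (a * d) := by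
  have schur (N : Matrix n n ℝ) : ‖N ⊙ M‖ ≤ ‖N‖ * d := by
    subst hM
    exact l2_opNorm_hadamard_transpose_mul_self_le N hd₀ hd
  have hM_norm : ‖M‖ ≤ a := by rwa [hM, l2_opNorm_transpose_mul_self]
  have ha₀ : 0 ≤ a := (norm_nonneg M).trans hM_norm
  have hP : ‖M ⊙ M‖ ≤ a * d := by grw [schur, hM_norm]
  have hPP : ‖M ⊙ M * M ⊙ M‖ ≤ (a * d) * (a * d) := by grw [l2_opNorm_mul, hP, hP]
  have hMM : ‖(M * M) ⊙ M‖ ≤ (a * a) * d := by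
    grw [schur, l2_opNorm_mul, hM_norm, hM_norm]
  calc _ ≤ _ := norm_covariance_combination_le hp₀ hp₁ σ _ _ _ _
    _ ≤ 2 * p * ((a * d) * (a * d) + a ^ 2 * d ^ 2) + 2 * p * σ ^ 2 * ((a * a) * d)
        + 2 * σ ^ 4 * (a * d) := by gcongr
    _ = _ := by ring

-- `r` and `L` stand for the aspect ratio `n / m` and for `log n`.
theorem C_norm_bound_general
    {m n : ℕ} (A : Matrix (Fin m) (Fin n) ℝ)
    (M P : Matrix (Fin n) (Fin n) ℝ) (hM : M = Aᵀ * A) (hP : P = M ⊙ M)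
    (σ p μ r L : ℝ) (hp0 : 0 ≤ p) (hp1 : p ≤ 1) (hr : 1 ≤ r)
    (C : Matrix (Fin n) (Fin n) ℝ)
    (hC : C = (2 * p) • (P * P) + (2 * p ^ 2) • Fmat M + (2 * p * σ ^ 2) • ((M * M) ⊙ M)
        + (2 * σ ^ 4) • ((A ⊙ A)ᵀ * (A ⊙ A) + Gmat A))
    (hA2 : specNorm A ≤ √r * μ) (hMmax : maxNorm M ≤ L * μ ^ 2)
    (hF : specNorm (Fmat M) ≤ r ^ 2 * L ^ 2 * μ ^ 8) :
    specNorm C ≤ 4 * p * r ^ 2 * L ^ 2 * μ ^ 8 + 2 * p * r ^ 2 * L * μ ^ 6 * σ ^ 2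
      + 4 * r ^ 2 * L * μ ^ 4 * σ ^ 4 := by
  rw [specNorm_eq_l2_opNorm] at hA2 hF ⊢
  have hA_sq : ‖A‖ ^ 2 ≤ r * μ ^ 2 := by
    grw [hA2, mul_pow, Real.sq_sqrt (by positivity)]
  have hdiag (j : Fin n) : M j j ≤ L * μ ^ 2 :=
    (le_abs_self _).trans ((abs_le_maxNorm M j j).trans hMmax)
  have hd₀ : 0 ≤ L * μ ^ 2 := (maxNorm_nonneg M).trans hMmax
  have hF' : ‖Fmat M‖ ≤ (r * μ ^ 2) ^ 2 * (L * μ ^ 2) ^ 2 := hF.trans_eq (by ring)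
  have hP_slack : r * μ ^ 2 * (L * μ ^ 2) ≤ 2 * r * (r * μ ^ 2 * (L * μ ^ 2)) :=
    le_mul_of_one_le_left (by positivity) (by linarith)
  rw [hC, hadamard_self_transpose_mul_self_add_Gmat, ← hM, hP]
  refine (l2_opNorm_covariance_le hM hp0 hp1 hA_sq hd₀ hdiag hF').trans ?_
  linear_combination (2 * σ ^ 4) * hP_slack

end CovarianceBound

/-- spectral-norm bound on the block-structure-independent matrix `C` of
the covariance decomposition, under the (μ,ν)-coherence bounds on `A`. -/
theorem C_norm_bound
    {m n : ℕ} (hm : 0 < m) (hmn : m ≤ n) (hn : 3 ≤ n)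
    (A : Matrix (Fin m) (Fin n) ℝ)
    (M P : Matrix (Fin n) (Fin n) ℝ) (hM : M = Aᵀ * A) (hP : P = Matrix.hadamard M M)
    (σ : ℝ) (hσ : 0 ≤ σ) (p : ℝ) (hp0 : 0 ≤ p) (hp1 : p ≤ 1)
    (μ : ℝ) (hμ : 0 < μ)
    (C : Matrix (Fin n) (Fin n) ℝ)
    (hC : C = (2 * p) • (P * P) + (2 * p ^ 2) • Fmat M
        + (2 * p * σ ^ 2) • Matrix.hadamard (M * M) M
        + (2 * σ ^ 4) • ((Matrix.hadamard A A)ᵀ * (Matrix.hadamard A A) + Gmat A))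
    (hA2 : specNorm A ≤ Real.sqrt ((n : ℝ) / m) * μ)
    (hAmax : maxNorm A ≤ Real.sqrt ((n : ℝ) * Real.log n / m) * μ)
    (hMmax : maxNorm M ≤ Real.log n * μ ^ 2)
    (hF : specNorm (Fmat M) ≤ (n : ℝ) ^ 2 / (m : ℝ) ^ 2 * Real.log n ^ 2 * μ ^ 8)
    (hG : specNorm (Gmat A) ≤ (n : ℝ) / m * Real.log n * μ ^ 4) :
    specNorm C ≤ 4 * p * ((n : ℝ) ^ 2 / (m : ℝ) ^ 2) * Real.log n ^ 2 * μ ^ 8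
      + 2 * p * ((n : ℝ) ^ 2 / (m : ℝ) ^ 2) * Real.log n * μ ^ 6 * σ ^ 2
      + 4 * ((n : ℝ) ^ 2 / (m : ℝ) ^ 2) * Real.log n * μ ^ 4 * σ ^ 4 := by
  rw [← div_pow] at hF ⊢
  exact C_norm_bound_general A M P hM hP σ p μ _ _ hp0 hp1
    ((one_le_div (mod_cast hm)).2 (mod_cast hmn)) C hC hA2 hMmax hF
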